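/- arXiv:0806.4012 — 3 statements merged into one kernel-verified Lean document; each statement's English description precedes it below -/
import Mathlib

section
/- Let P be a finite pure simplicial poset of rank k, let σ = (σ_1, …, σ_m) be a composition of k, and let π = (π_1, …, π_m) be a rearrangement (permutation) of the parts of σ. If π_1 ≥ σ_1, then the face-to-flag degree sequence d^σ(P) majorizes the face-to-flag degree sequence d^π(P), i.e. d^σ(P) ⊵ d^π(P). -/
/-- `rk` is the rank function of a simplicial poset: every principal order
ideal `[⊥, x]` is order-isomorphic to the Boolean lattice of rank `rk x`
(the lattice of all subsets of a set with `rk x` elements). -/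
def IsSimplicial {P : Type*} [PartialOrder P] [OrderBot P] (rk : P → ℕ) : Prop :=
  ∀ x : P, Nonempty (Set.Icc (⊥ : P) x ≃o Finset (Fin (rk x)))

/-- The face-to-flag degree `d^σ(F)`: the number of chains
`F = X_1 < X_2 < ⋯ < X_m` with `rk (X_j) = σ_1 + ⋯ + σ_j` for all `j`. -/
noncomputable def flagDeg {P : Type*} [PartialOrder P] (rk : P → ℕ) {m : ℕ} [NeZero m]
    (σ : Fin m → ℕ) (F : P) : ℕ :=
  Nat.card {X : Fin m → P // X 0 = F ∧ StrictMono X ∧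
    ∀ j : Fin m, rk (X j) = ∑ i ∈ Finset.Iic j, σ i}

/-- The face-to-flag degree sequence `d^σ(P)`, as the multiset of degrees
`d^σ(F)` over all rank-`σ_1` elements `F`. -/
noncomputable def degSeq {P : Type*} [Fintype P] [PartialOrder P] (rk : P → ℕ) {m : ℕ}
    [NeZero m] (σ : Fin m → ℕ) : Multiset ℕ :=
  (Finset.univ.filter (fun F : P => rk F = σ 0)).val.map (flagDeg rk σ)

/-- Majorization `a ⊵ b` of multisets of natural numbers: the total sums agree and,
listing both in weakly decreasing order (padding with zeros, which is immaterial
here), every partial sum of `a` is at least the corresponding partial sum of `b`. -/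
def Majorizes (a b : Multiset ℕ) : Prop :=
  a.sum = b.sum ∧
  ∀ r : ℕ, ((b.sort (· ≥ ·)).take r).sum ≤ ((a.sort (· ≥ ·)).take r).sum

/-! By simpliciality every coface relation is counted inside a Boolean lattice, which gives the
closed form `d^σ(F) = (σ_2 + ⋯ + σ_m; σ_2, …, σ_m) * f(F)`, a multinomial coefficient times the
number `f(F)` of rank-`k` cofaces of `F`. The first factor only decreases from `σ` to `π`, and `f`
satisfies a local LYM inequality: a family of rank-`π_1` faces weighted by `d^π` weighs at most as
much as the family of its rank-`σ_1` subfaces weighted by `d^σ`. By the Hardy–Littlewood–Pólya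
criterion it is enough to compare `∑ (d - t)₊` for every threshold `t`, and this goes by descending
induction on `t`: if the faces with `d^π > t` have no more subfaces than there are of them, the LYM
inequality decides; otherwise the sum for `d^σ` grows at least as fast as the one for `d^π` when
`t` decreases by one. -/

open Finset

section Majorization

lemma sum_take_le_mul_add_sum_tsub (l : List ℕ) (r t : ℕ) :
    (l.take r).sum ≤ r * t + (l.map (· - t)).sum := by
  induction l generalizing r with
  | nil => simp
  | cons x l ih =>
    cases r with
    | zero => simp
    | succ r =>
      simp only [List.take_succ_cons, List.sum_cons, List.map_cons, Nat.succ_mul]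
      have := ih r
      omega

lemma sum_take_eq_mul_add_sum_tsub {l : List ℕ} (hl : l.Pairwise (· ≥ ·)) (r : ℕ) :
    (l.take r).sum = r * l.getD r 0 + (l.map (· - l.getD r 0)).sum := by
  induction l generalizing r with
  | nil => simp
  | cons x l ih =>
    obtain ⟨hx, hl⟩ := List.pairwise_cons.1 hl
    cases r with
    | zero =>
      have hzero : ∀ y ∈ (x :: l).map (· - x), y = 0 := by
        simpa [Nat.sub_eq_zero_iff_le] using hx
      simpa using (List.sum_eq_zero hzero).symm
    | succ r =>
      have hle : l.getD r 0 ≤ x := by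
        rcases lt_or_ge r l.length with hr | hr
        · rw [List.getD_eq_getElem _ _ hr]
          exact hx _ (List.getElem_mem hr)
        · exact List.getD_eq_default _ _ hr ▸ Nat.zero_le x
      simp only [List.take_succ_cons, List.sum_cons, List.map_cons, List.getD_cons_succ,
        Nat.succ_mul, ih hl r]
      omega

theorem majorizes_of_sum_tsub_le {a b : Multiset ℕ} (hsum : a.sum = b.sum)
    (h : ∀ t, (b.map (· - t)).sum ≤ (a.map (· - t)).sum) : Majorizes a b := by
  refine ⟨hsum, fun r => ?_⟩
  have sum_sort (s : Multiset ℕ) (t : ℕ) :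
      ((s.sort (· ≥ ·)).map (· - t)).sum = (s.map (· - t)).sum := by
    rw [← Multiset.sum_coe, ← Multiset.map_coe, Multiset.sort_eq]
  set t := (a.sort (· ≥ ·)).getD r 0
  calc ((b.sort (· ≥ ·)).take r).sum
      ≤ r * t + (b.map (· - t)).sum := sum_sort b t ▸ sum_take_le_mul_add_sum_tsub _ r t
    _ ≤ r * t + (a.map (· - t)).sum := Nat.add_le_add_left (h t) _
    _ = ((a.sort (· ≥ ·)).take r).sum := by
      rw [sum_take_eq_mul_add_sum_tsub (Multiset.pairwise_sort a _), sum_sort]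

lemma sum_tsub_eq_sum_tsub_succ_add_card {α : Type*} (s : Finset α) (f : α → ℕ) (t : ℕ) :
    ∑ x ∈ s, (f x - t) = ∑ x ∈ s, (f x - (t + 1)) + #{x ∈ s | t < f x} := by
  rw [card_filter, ← sum_add_distrib]
  refine sum_congr rfl fun x _ => ?_
  split_ifs <;> omega

lemma card_mul_add_sum_tsub {α : Type*} {s : Finset α} {f : α → ℕ} {t : ℕ}
    (h : ∀ x ∈ s, t ≤ f x) : #s * t + ∑ x ∈ s, (f x - t) = ∑ x ∈ s, f x := by
  rw [← smul_eq_mul, ← sum_const, ← sum_add_distrib]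
  exact sum_congr rfl fun x hx => Nat.add_sub_of_le (h x hx)

open Classical in
theorem sum_tsub_le_sum_tsub_of_sum_le_sum_related {α β : Type*} {A : Finset α} {B : Finset β}
    {R : α → β → Prop} {u : α → ℕ} {v : β → ℕ}
    (hle : ∀ x ∈ A, ∀ y ∈ B, R x y → v y ≤ u x)
    (hsum : ∀ S ⊆ B, ∑ y ∈ S, v y ≤ ∑ x ∈ A with ∃ y ∈ S, R x y, u x) (t : ℕ) :
    ∑ y ∈ B, (v y - t) ≤ ∑ x ∈ A, (u x - t) := by
  induction hd : B.sup v - t generalizing t with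
  | zero =>
    have hv : ∀ y ∈ B, v y - t = 0 := fun y hy => by
      have := le_sup (f := v) hy
      omega
    simp [sum_eq_zero hv]
  | succ d ih =>
    set S := {y ∈ B | t < v y}
    set N := {x ∈ A | ∃ y ∈ S, R x y}
    have hNu : ∀ x ∈ N, t < u x := fun x hx => by
      obtain ⟨hxA, y, hyS, hxy⟩ := mem_filter.1 hx
      obtain ⟨hyB, hty⟩ := mem_filter.1 hyS
      exact hty.trans_le (hle x hxA y hyB hxy)
    rcases le_or_gt #N #S with hcard | hcard
    · have hS : ∑ y ∈ S, (v y - t) = ∑ y ∈ B, (v y - t) :=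
        sum_filter_of_ne fun y _ hy => by omega
      have hN : ∑ x ∈ N, (u x - t) ≤ ∑ x ∈ A, (u x - t) :=
        sum_le_sum_of_subset (filter_subset _ _)
      have hSv := card_mul_add_sum_tsub (s := S) (f := v) fun y hy => (mem_filter.1 hy).2.le
      have hNv := card_mul_add_sum_tsub fun x hx => (hNu x hx).le
      have hSN : ∑ y ∈ S, v y ≤ ∑ x ∈ N, u x := hsum S (filter_subset _ _)
      have hmul := Nat.mul_le_mul_right t hcard
      omega
    · have hNU : #N ≤ #{x ∈ A | t < u x} :=
        card_le_card fun x hx => mem_filter.2 ⟨(mem_filter.1 hx).1, hNu x hx⟩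
      rw [sum_tsub_eq_sum_tsub_succ_add_card B, sum_tsub_eq_sum_tsub_succ_add_card A]
      exact add_le_add (ih (t + 1) (by omega)) (hcard.le.trans hNU)

end Majorization

section Counting

lemma card_filter_superset {α : Type*} [Fintype α] [DecidableEq α] (A : Finset α) (c : ℕ) :
    #{B : Finset α | A ⊆ B ∧ #B = #A + c} = (Fintype.card α - #A).choose c := by
  rw [← card_compl, ← card_powersetCard]
  refine card_nbij' (· \ A) (A ∪ ·) (fun B hB => ?_) (fun C hC => ?_) (fun B hB => ?_)
    (fun C hC => ?_)
  · simp only [coe_filter, mem_univ, true_and, Set.mem_ofPred_eq] at hB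
    refine mem_powersetCard.2 ⟨fun x hx => mem_compl.2 (mem_sdiff.1 hx).2, ?_⟩
    rw [card_sdiff_of_subset hB.1, hB.2, Nat.add_sub_cancel_left]
  · obtain ⟨hCA, hC⟩ := mem_powersetCard.1 hC
    have hdisj : Disjoint A C := subset_compl_iff_disjoint_left.1 hCA
    simp [card_union_of_disjoint hdisj, hC]
  · simp only [coe_filter, mem_univ, true_and, Set.mem_ofPred_eq] at hB
    exact union_sdiff_of_subset hB.1
  · obtain ⟨hCA, -⟩ := mem_powersetCard.1 hC
    exact union_sdiff_cancel_left (subset_compl_iff_disjoint_left.1 hCA)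

lemma choose_le_choose_of_add_le {n a b : ℕ} (hab : a ≤ b) (h : a + b ≤ n) :
    n.choose a ≤ n.choose b := by
  refine Nat.le_of_mul_le_mul_right (c := b.choose a) ?_ (Nat.choose_pos hab)
  calc n.choose a * b.choose a
      = n.choose a * b.choose (b - a) := by rw [Nat.choose_symm hab]
    _ ≤ n.choose a * (n - a).choose (b - a) :=
      Nat.mul_le_mul_left _ (Nat.choose_le_choose _ (by omega))
    _ = n.choose b * b.choose a := (Nat.choose_mul hab).symm

lemma mul_choose_eq_mul_choose {k a c p q : ℕ} (hak : a ≤ k)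
    (h : p * k.choose a = q * k.choose (a + c)) :
    p * (a + c).choose a = q * (k - a).choose c := by
  have hchoose := Nat.choose_mul (n := k) (Nat.le_add_right a c)
  rw [Nat.add_sub_cancel_left] at hchoose
  refine Nat.eq_of_mul_eq_mul_left (Nat.choose_pos hak) ?_
  calc k.choose a * (p * (a + c).choose a)
      = (p * k.choose a) * (a + c).choose a := by ring
    _ = q * (k.choose (a + c) * (a + c).choose a) := by rw [h, mul_assoc]
    _ = k.choose a * (q * (k - a).choose c) := by rw [hchoose]; ring

lemma choose_sum_le_choose_sum {ι : Type*} [Fintype ι] (σ : ι → ℕ) {i j : ι} (h : σ i ≤ σ j) :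
    (∑ l, σ l).choose (σ i) ≤ (∑ l, σ l).choose (σ j) := by
  classical
  rcases eq_or_ne i j with rfl | hij
  · rfl
  · refine choose_le_choose_of_add_le h ?_
    rw [← sum_pair hij]
    exact sum_le_sum_of_subset (subset_univ _)

lemma multinomial_univ_succ {n : ℕ} (σ : Fin (n + 1) → ℕ) :
    Nat.multinomial univ σ =
      (∑ i, σ i).choose (σ 0) * Nat.multinomial univ fun i : Fin n => σ i.succ := by
  rw [Fin.univ_succ, Nat.multinomial_cons, sum_cons]
  simp [Nat.multinomial]

lemma multinomial_univ_comp_equiv {ι : Type*} [Fintype ι] (σ : ι → ℕ) (e : Equiv.Perm ι) :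
    Nat.multinomial univ (σ ∘ e) = Nat.multinomial univ σ := by
  simp only [Nat.multinomial, Function.comp_apply, Equiv.sum_comp e σ,
    Equiv.prod_comp e fun i => (σ i).factorial]

lemma sum_Iic_fin_zero {M : Type*} [AddCommMonoid M] {n : ℕ} (f : Fin (n + 1) → M) :
    ∑ i ∈ Iic 0, f i = f 0 := by
  rw [← bot_eq_zero, Iic_bot, sum_singleton]

lemma sum_Iic_fin_succ {M : Type*} [AddCommMonoid M] {n : ℕ} (f : Fin (n + 1) → M) (j : Fin n) :
    ∑ i ∈ Iic j.succ, f i = f 0 + ∑ i ∈ Iic j, f i.succ := by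
  rw [← Icc_bot, ← Ioc_insert_left bot_le, bot_eq_zero, ← Fin.map_succEmb_Iic,
    sum_insert (by simp), sum_map]
  rfl

end Counting

section Simplicial

variable {P : Type*} [PartialOrder P] [OrderBot P] {rk : P → ℕ}

lemma IsSimplicial.ncard_Icc_bot (hs : IsSimplicial rk) (x : P) :
    (Set.Icc ⊥ x).ncard = 2 ^ rk x := by
  obtain ⟨φ⟩ := hs x
  rw [← Nat.card_coe_set_eq, Nat.card_congr φ.toEquiv]
  simp

lemma IsSimplicial.card_apply (hs : IsSimplicial rk) {T : P} {n : ℕ}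
    (φ : Set.Icc ⊥ T ≃o Finset (Fin n)) (x : Set.Icc ⊥ T) : #(φ x) = rk x := by
  have himage : Subtype.val '' Set.Iic x = Set.Icc ⊥ (x : P) := by
    ext y
    simp only [Set.mem_image, Set.mem_Iic, Subtype.exists, Set.mem_Icc, bot_le, true_and]
    exact ⟨fun ⟨_, _, hy, h⟩ => h ▸ hy, fun hy => ⟨y, hy.trans x.2.2, hy, rfl⟩⟩
  refine Nat.pow_right_injective le_rfl ?_
  calc 2 ^ #(φ x)
      = (Set.Iic (φ x)).ncard := by rw [← card_Iic_finset, ← Set.ncard_coe_finset, coe_Iic]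
    _ = (Set.Iic x).ncard := by
      rw [← OrderIso.image_Iic, Set.ncard_image_of_injective _ φ.injective]
    _ = (Set.Icc ⊥ (x : P)).ncard := by
      rw [← himage, Set.ncard_image_of_injective _ Subtype.val_injective]
    _ = 2 ^ rk x := hs.ncard_Icc_bot x

lemma IsSimplicial.rk_bot (hs : IsSimplicial rk) : rk ⊥ = 0 :=
  Nat.pow_right_injective le_rfl (by simpa using (hs.ncard_Icc_bot ⊥).symm)

lemma IsSimplicial.strictMono (hs : IsSimplicial rk) : StrictMono rk := by
  intro x y hxy
  obtain ⟨φ⟩ := hs y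
  have hlt : φ ⟨x, bot_le, hxy.le⟩ < φ ⟨y, bot_le, le_rfl⟩ := φ.strictMono hxy
  simpa only [hs.card_apply φ] using card_lt_card hlt

variable [Fintype P]

open Classical in
lemma IsSimplicial.card_filter_between (hs : IsSimplicial rk) {F T : P} (hFT : F ≤ T) (c : ℕ) :
    #{G | F ≤ G ∧ G ≤ T ∧ rk G = rk F + c} = (rk T - rk F).choose c := by
  obtain ⟨φ⟩ := hs T
  have hcard := hs.card_apply φ ⟨F, bot_le, hFT⟩
  have hcount := card_filter_superset (φ ⟨F, bot_le, hFT⟩) c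
  rw [Fintype.card_fin, hcard] at hcount
  rw [← hcount]
  refine card_bij (fun G hG => φ ⟨G, bot_le, (mem_filter.1 hG).2.2.1⟩) (fun G hG => ?_)
    (fun G hG G' hG' h => ?_) (fun B hB => ?_)
  · obtain ⟨-, hFG, -, hrk⟩ := mem_filter.1 hG
    exact mem_filter.2 ⟨mem_univ _, φ.monotone hFG, by rw [hs.card_apply φ, hrk]⟩
  · exact congrArg Subtype.val (φ.injective h)
  · obtain ⟨-, hAB, hB⟩ := mem_filter.1 hB
    have hle : ⟨F, bot_le, hFT⟩ ≤ φ.symm B := φ.le_symm_apply.2 hAB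
    refine ⟨φ.symm B, mem_filter.2 ⟨mem_univ _, hle, (φ.symm B).2.2, ?_⟩, φ.apply_symm_apply B⟩
    rw [← hs.card_apply φ, φ.apply_symm_apply, hB]

open Classical in
lemma IsSimplicial.card_filter_le (hs : IsSimplicial rk) (G : P) (a : ℕ) :
    #{F | F ≤ G ∧ rk F = a} = (rk G).choose a := by
  simpa [hs.rk_bot] using hs.card_filter_between (bot_le : ⊥ ≤ G) a

end Simplicial

section Cofaces

variable {P : Type*} [Fintype P] [PartialOrder P]

open Classical in
/-- The cofaces of `F` of rank `b`: the elements of rank `b` lying above `F`. -/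
noncomputable def cofaces (rk : P → ℕ) (b : ℕ) (F : P) : Finset P :=
  {G | F ≤ G ∧ rk G = b}

lemma mem_cofaces {rk : P → ℕ} {b : ℕ} {F G : P} : G ∈ cofaces rk b F ↔ F ≤ G ∧ rk G = b := by
  simp [cofaces]

lemma cofaces_antitone (rk : P → ℕ) (b : ℕ) : Antitone (cofaces rk b) := fun _ _ hFG _ hT =>
  mem_cofaces.2 ⟨hFG.trans (mem_cofaces.1 hT).1, (mem_cofaces.1 hT).2⟩

variable [OrderBot P] {rk : P → ℕ}

lemma cofaces_bot (b : ℕ) : cofaces rk b ⊥ = ({F | rk F = b} : Finset P) := by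
  ext
  simp [mem_cofaces]

lemma IsSimplicial.cofaces_rk (hs : IsSimplicial rk) (F : P) : cofaces rk (rk F) F = {F} := by
  ext G
  rw [mem_cofaces, mem_singleton]
  exact ⟨fun ⟨hle, hrk⟩ => (hle.eq_of_not_lt fun hlt => (hs.strictMono hlt).ne' hrk).symm,
    fun h => h ▸ ⟨le_rfl, rfl⟩⟩

theorem IsSimplicial.sum_card_cofaces (hs : IsSimplicial rk) (k c : ℕ) (F : P) :
    ∑ G ∈ cofaces rk (rk F + c) F, #(cofaces rk k G) =
      (k - rk F).choose c * #(cofaces rk k F) := by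
  classical
  calc ∑ G ∈ cofaces rk (rk F + c) F, #(cofaces rk k G)
      = ∑ T ∈ cofaces rk k F, #{G | F ≤ G ∧ G ≤ T ∧ rk G = rk F + c} := by
        simp only [card_eq_sum_ones]
        refine sum_comm' fun G T => ?_
        simp only [mem_cofaces, mem_filter, mem_univ, true_and]
        exact ⟨fun ⟨⟨hFG, hG⟩, hGT, hT⟩ => ⟨⟨hFG, hGT, hG⟩, hFG.trans hGT, hT⟩,
          fun ⟨⟨hFG, hGT, hG⟩, _, hT⟩ => ⟨⟨hFG, hG⟩, hGT, hT⟩⟩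
    _ = ∑ _T ∈ cofaces rk k F, (k - rk F).choose c :=
        sum_congr rfl fun T hT => by
          rw [hs.card_filter_between (mem_cofaces.1 hT).1, (mem_cofaces.1 hT).2]
    _ = (k - rk F).choose c * #(cofaces rk k F) := by rw [sum_const, smul_eq_mul, mul_comm]

lemma IsSimplicial.sum_card_cofaces_rank (hs : IsSimplicial rk) (k a : ℕ) :
    ∑ F with rk F = a, #(cofaces rk k F) = k.choose a * #(cofaces rk k ⊥) := by
  simpa [hs.rk_bot, cofaces_bot] using hs.sum_card_cofaces k a ⊥

open Classical in
theorem IsSimplicial.local_lym (hs : IsSimplicial rk) (k : ℕ) {a c : ℕ} {S : Finset P}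
    (hS : ∀ G ∈ S, rk G = a + c) :
    (a + c).choose a * ∑ G ∈ S, #(cofaces rk k G) ≤
      (k - a).choose c * ∑ F with rk F = a ∧ ∃ G ∈ S, F ≤ G, #(cofaces rk k F) := by
  calc (a + c).choose a * ∑ G ∈ S, #(cofaces rk k G)
      = ∑ G ∈ S, ∑ F with F ≤ G ∧ rk F = a, #(cofaces rk k G) := by
        rw [mul_sum]
        refine sum_congr rfl fun G hG => ?_
        rw [sum_const, smul_eq_mul, hs.card_filter_le, hS G hG]
    _ = ∑ F with rk F = a ∧ ∃ G ∈ S, F ≤ G, ∑ G ∈ S with F ≤ G, #(cofaces rk k G) := by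
        refine sum_comm' fun G F => ?_
        simp only [mem_filter, mem_univ, true_and]
        exact ⟨fun ⟨hG, hFG, hF⟩ => ⟨⟨hG, hFG⟩, hF, G, hG, hFG⟩,
          fun ⟨⟨hG, hFG⟩, hF, _⟩ => ⟨hG, hFG, hF⟩⟩
    _ ≤ ∑ F with rk F = a ∧ ∃ G ∈ S, F ≤ G,
          ∑ G ∈ cofaces rk (rk F + c) F, #(cofaces rk k G) := by
        refine sum_le_sum fun F hF => sum_le_sum_of_subset fun G hG => ?_
        obtain ⟨hGS, hFG⟩ := mem_filter.1 hG
        obtain ⟨-, hrk, -⟩ := mem_filter.1 hF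
        exact mem_cofaces.2 ⟨hFG, by rw [hS G hGS, hrk]⟩
    _ = (k - a).choose c * ∑ F with rk F = a ∧ ∃ G ∈ S, F ≤ G, #(cofaces rk k F) := by
        rw [mul_sum]
        refine sum_congr rfl fun F hF => ?_
        rw [hs.sum_card_cofaces, (mem_filter.1 hF).2.1]

theorem IsSimplicial.majorizes_card_cofaces (hs : IsSimplicial rk) {k a b p q : ℕ} (hab : a ≤ b)
    (hbk : b ≤ k) (hqp : q ≤ p) (h : p * k.choose a = q * k.choose b) :
    Majorizes (({F | rk F = a} : Finset P).val.map fun F => p * #(cofaces rk k F))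
      (({G | rk G = b} : Finset P).val.map fun G => q * #(cofaces rk k G)) := by
  classical
  refine majorizes_of_sum_tsub_le ?_ fun t => ?_
  · change ∑ F with rk F = a, p * _ = ∑ G with rk G = b, q * _
    rw [← mul_sum, ← mul_sum, hs.sum_card_cofaces_rank, hs.sum_card_cofaces_rank, ← mul_assoc, h,
      mul_assoc]
  obtain ⟨c, rfl⟩ := Nat.exists_eq_add_of_le hab
  have hpq := mul_choose_eq_mul_choose (hab.trans hbk) h
  simp only [Multiset.map_map, Function.comp_apply]
  refine sum_tsub_le_sum_tsub_of_sum_le_sum_related (R := (· ≤ ·))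
    (fun F _ G _ hFG => Nat.mul_le_mul hqp (card_le_card (cofaces_antitone rk k hFG)))
    (fun S hS => ?_) t
  have hlym := hs.local_lym k fun G hG => (mem_filter.1 (hS hG)).2
  rw [← mul_sum, ← mul_sum, filter_filter]
  refine Nat.le_of_mul_le_mul_left (c := (a + c).choose a) ?_ (Nat.choose_pos hab)
  calc (a + c).choose a * (q * ∑ G ∈ S, #(cofaces rk k G))
      = q * ((a + c).choose a * ∑ G ∈ S, #(cofaces rk k G)) := by ring
    _ ≤ q * ((k - a).choose c * _) := Nat.mul_le_mul_left q hlym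
    _ = (a + c).choose a * (p * _) := by rw [← mul_assoc, ← hpq]; ring

end Cofaces

section Flags

open Matrix (vecCons)

variable {P : Type*} [PartialOrder P]

/-- `X_1 < ⋯ < X_m` is a flag of type `σ`: a chain with `rk (X_j) = σ_1 + ⋯ + σ_j`. -/
def IsFlag (rk : P → ℕ) {m : ℕ} (σ : Fin m → ℕ) (X : Fin m → P) : Prop :=
  StrictMono X ∧ ∀ j, rk (X j) = ∑ i ∈ Iic j, σ i

lemma isFlag_vecCons_vecCons {rk : P → ℕ} {n a b : ℕ} {τ : Fin n → ℕ} {F : P}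
    {Y : Fin (n + 1) → P} :
    IsFlag rk (vecCons a (vecCons b τ)) (vecCons F Y) ↔
      F < Y 0 ∧ rk F = a ∧ IsFlag rk (vecCons (a + b) τ) Y := by
  have hsum (j : Fin (n + 1)) :
      a + ∑ i ∈ Iic j, vecCons b τ i = ∑ i ∈ Iic j, vecCons (a + b) τ i := by
    cases j using Fin.cases with
    | zero => simp [sum_Iic_fin_zero]
    | succ j => simp [sum_Iic_fin_succ, add_assoc]
  simp only [IsFlag, strictMono_vecCons, Fin.forall_fin_succ (n := n + 1),
    sum_Iic_fin_zero, sum_Iic_fin_succ,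
    Matrix.cons_val_zero, Matrix.cons_val_succ, hsum]
  tauto

lemma flagDeg_of_fin_one {rk : P → ℕ} {σ : Fin 1 → ℕ} {F : P} (hF : rk F = σ 0) :
    flagDeg rk σ F = 1 := by
  refine Nat.card_eq_one_iff_exists.2 ⟨⟨fun _ => F, rfl, Subsingleton.strictMono _, fun j => ?_⟩,
    fun X => Subtype.ext (funext fun j => ?_)⟩
  · rw [Subsingleton.elim j 0, hF, sum_Iic_fin_zero]
  · rw [Subsingleton.elim j 0, X.2.1]

variable [Fintype P]

open Classical in
lemma flagDeg_eq_card_filter (rk : P → ℕ) {m : ℕ} [NeZero m] (σ : Fin m → ℕ) (F : P) :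
    flagDeg rk σ F = #{X : Fin m → P | X 0 = F ∧ IsFlag rk σ X} :=
  Nat.subtype_card _ fun X => by rw [mem_filter_univ, IsFlag]

open Classical in
lemma flagDeg_vecCons_vecCons_eq_card_filter (rk : P → ℕ) {n : ℕ} (b : ℕ) (τ : Fin n → ℕ) (F : P) :
    flagDeg rk (vecCons (rk F) (vecCons b τ)) F =
      #{Y : Fin (n + 1) → P | F < Y 0 ∧ IsFlag rk (vecCons (rk F + b) τ) Y} := by
  rw [flagDeg_eq_card_filter]
  refine card_nbij' Matrix.vecTail (vecCons F) (fun X hX => ?_) (fun Y hY => ?_)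
    (fun X hX => ?_) (fun Y _ => Matrix.tail_cons F Y)
  · obtain ⟨-, rfl, hX⟩ := mem_filter.1 hX
    rw [← Matrix.cons_head_tail X, isFlag_vecCons_vecCons] at hX
    exact mem_filter.2 ⟨mem_univ _, hX.1, hX.2.2⟩
  · obtain ⟨-, hFY, hY⟩ := mem_filter.1 hY
    exact mem_filter.2 ⟨mem_univ _, rfl, isFlag_vecCons_vecCons.2 ⟨hFY, rfl, hY⟩⟩
  · obtain ⟨-, rfl, -⟩ := mem_filter.1 hX
    exact Matrix.cons_head_tail X

lemma flagDeg_vecCons_vecCons (rk : P → ℕ) {n b : ℕ} (hb : 0 < b) (τ : Fin n → ℕ) (F : P) :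
    flagDeg rk (vecCons (rk F) (vecCons b τ)) F =
      ∑ G ∈ cofaces rk (rk F + b) F, flagDeg rk (vecCons (rk F + b) τ) G := by
  classical
  have hrk {Y : Fin (n + 1) → P} (hY : IsFlag rk (vecCons (rk F + b) τ) Y) :
      rk (Y 0) = rk F + b := by simpa [sum_Iic_fin_zero] using hY.2 0
  have hmaps : ∀ Y ∈ ({Y | F < Y 0 ∧ IsFlag rk (vecCons (rk F + b) τ) Y} : Finset _),
      Y 0 ∈ cofaces rk (rk F + b) F := fun Y hY => by
    obtain ⟨-, hFY, hY⟩ := mem_filter.1 hY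
    exact mem_cofaces.2 ⟨hFY.le, hrk hY⟩
  rw [flagDeg_vecCons_vecCons_eq_card_filter, card_eq_sum_card_fiberwise hmaps]
  refine sum_congr rfl fun G hG => ?_
  obtain ⟨hFG, hG⟩ := mem_cofaces.1 hG
  have hlt : F < G := hFG.lt_of_ne fun h => by
    subst h
    omega
  rw [flagDeg_eq_card_filter, filter_filter]
  congr 1
  refine filter_congr fun Y _ => ?_
  exact ⟨fun ⟨⟨_, hY⟩, h0⟩ => ⟨h0, hY⟩, fun ⟨h0, hY⟩ => ⟨⟨h0 ▸ hlt, hY⟩, h0⟩⟩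

variable [OrderBot P] {rk : P → ℕ}

theorem IsSimplicial.flagDeg_vecCons (hs : IsSimplicial rk) {n : ℕ} {τ : Fin n → ℕ}
    (hτ : ∀ i, 0 < τ i) (F : P) :
    flagDeg rk (vecCons (rk F) τ) F =
      Nat.multinomial univ τ * #(cofaces rk (rk F + ∑ i, τ i) F) := by
  induction τ using Fin.consInduction generalizing F with
  | elim0 => simp [flagDeg_of_fin_one, hs.cofaces_rk]
  | cons b τ ih =>
    obtain ⟨hb, hτ⟩ := Fin.forall_fin_succ.1 hτ
    simp only [Fin.cons_zero, Fin.cons_succ] at hb hτ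
    calc flagDeg rk (vecCons (rk F) (vecCons b τ)) F
        = ∑ G ∈ cofaces rk (rk F + b) F, flagDeg rk (vecCons (rk F + b) τ) G :=
          flagDeg_vecCons_vecCons rk hb τ F
      _ = ∑ G ∈ cofaces rk (rk F + b) F,
            Nat.multinomial univ τ * #(cofaces rk (rk F + b + ∑ i, τ i) G) :=
          sum_congr rfl fun G hG => by rw [← (mem_cofaces.1 hG).2, ih hτ G]
      _ = Nat.multinomial univ τ *
            ((b + ∑ i, τ i).choose b * #(cofaces rk (rk F + b + ∑ i, τ i) F)) := by
          rw [← mul_sum, hs.sum_card_cofaces, add_assoc, Nat.add_sub_cancel_left]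
      _ = _ := by
          rw [multinomial_univ_succ, Fin.sum_univ_succ]
          simp only [Fin.cons_zero, Fin.cons_succ]
          ring_nf

theorem IsSimplicial.degSeq_eq (hs : IsSimplicial rk) {n : ℕ} {σ : Fin (n + 1) → ℕ}
    (hσ : ∀ i, 0 < σ i) :
    degSeq rk σ = ({F | rk F = σ 0} : Finset P).val.map fun F =>
      Nat.multinomial univ (fun i : Fin n => σ i.succ) * #(cofaces rk (∑ i, σ i) F) := by
  refine Multiset.map_congr rfl fun F hF => ?_
  have hF : rk F = σ 0 := (mem_filter.1 hF).2
  have hdeg := hs.flagDeg_vecCons (fun i : Fin n => hσ i.succ) F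
  rwa [hF, ← Fin.sum_univ_succ, show vecCons (σ 0) (fun i : Fin n => σ i.succ) = σ from
    Fin.cons_self_tail σ] at hdeg

end Flags

theorem face_to_flag_majorization_general
    {P : Type*} [Fintype P] [PartialOrder P] [OrderBot P]
    {rk : P → ℕ} (hsimp : IsSimplicial rk) {m : ℕ} [NeZero m] {σ π : Fin m → ℕ}
    (hpos : ∀ i, 0 < σ i) (e : Equiv.Perm (Fin m)) (hπ : π = σ ∘ e) (h1 : σ 0 ≤ π 0) :
    Majorizes (degSeq rk σ) (degSeq rk π) := by
  obtain ⟨n, rfl⟩ := Nat.exists_eq_add_one_of_ne_zero (NeZero.ne m)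
  have hsum : ∑ i, π i = ∑ i, σ i := hπ ▸ Equiv.sum_comp e σ
  have hmultinomial : Nat.multinomial univ σ = Nat.multinomial univ π :=
    hπ ▸ (multinomial_univ_comp_equiv σ e).symm
  rw [multinomial_univ_succ, multinomial_univ_succ, hsum, mul_comm, mul_comm (Nat.choose _ _)]
    at hmultinomial
  have hle : π 0 ≤ ∑ i, σ i := hsum ▸ single_le_sum (fun _ _ => Nat.zero_le _) (mem_univ 0)
  have hchoose : (∑ i, σ i).choose (σ 0) ≤ (∑ i, σ i).choose (π 0) := by
    subst hπ
    exact choose_sum_le_choose_sum σ h1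
  rw [hsimp.degSeq_eq hpos, hsimp.degSeq_eq (fun i => hπ ▸ hpos (e i)), hsum]
  refine hsimp.majorizes_card_cofaces h1 hle ?_ hmultinomial
  refine Nat.le_of_mul_le_mul_right ?_ (Nat.choose_pos (h1.trans hle))
  exact (Nat.mul_le_mul_left _ hchoose).trans_eq hmultinomial.symm

/-- Let `P` be a finite pure simplicial poset of rank `k`, `σ = (σ_1, …, σ_m)` a
composition of `k`, and `π` a rearrangement of the parts of `σ`.  If `π_1 ≥ σ_1`
then `d^σ(P) ⊵ d^π(P)`. -/
theorem face_to_flag_majorization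
    {P : Type*} [Fintype P] [PartialOrder P] [OrderBot P]
    (rk : P → ℕ) (hsimp : IsSimplicial rk)
    (k : ℕ) (hpure : ∀ x : P, IsMax x → rk x = k)
    {m : ℕ} [NeZero m] (σ π : Fin m → ℕ)
    (hpos : ∀ i, 0 < σ i) (hsum : ∑ i, σ i = k)
    (e : Equiv.Perm (Fin m)) (hπ : π = σ ∘ e)
    (h1 : σ 0 ≤ π 0) :
    Majorizes (degSeq rk σ) (degSeq rk π) :=
  face_to_flag_majorization_general hsimp hpos e hπ h1
end

section
/- Let P be a finite pure simplicial poset of rank k, and let i be an integer with 0 < i and i ≤ k − i. Then f_i(P) ≤ f_{k−i}(P), where f_r(P) denotes the number of rank-r elements of P. -/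
/-!
In the free `ℚ`-module on `P`, send each element `y` of rank `j` to the sum of the rank-`i` elements
below it. These sums span all rank-`i` elements, which gives `f_i ≤ f_j` by comparing dimensions.
Spanning is local: it suffices to work in the Boolean lattice below some `z ≥ x` of rank at least
`i + j`. There, averaging over the facets of a set gives the sums attached to all larger sets,
and inclusion-exclusion then isolates the single `i`-set corresponding to `x`.
-/

open Finset Submodule

section PowersetCard

variable {α M : Type*}

theorem sum_sum_powersetCard_erase [DecidableEq α] [AddCommMonoid M] (e : Finset α → M) (i : ℕ)
    (S : Finset α) :
    ∑ x ∈ S, ∑ T ∈ (S.erase x).powersetCard i, e T =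
      (#S - i) • ∑ T ∈ S.powersetCard i, e T := by
  have swap : ∑ x ∈ S, ∑ T ∈ (S.erase x).powersetCard i, e T =
      ∑ T ∈ S.powersetCard i, ∑ _x ∈ S \ T, e T := by
    refine sum_comm' fun x T ↦ ?_
    simp only [mem_powersetCard, mem_sdiff, subset_erase]
    tauto
  rw [swap, smul_sum]
  refine sum_congr rfl fun T hT ↦ ?_
  obtain ⟨hTS, hTi⟩ := mem_powersetCard.1 hT
  rw [sum_const, card_sdiff_of_subset hTS, hTi]

theorem sum_powersetCard_insert_subset_add_sum_erase [DecidableEq α] [AddCommMonoid M]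
    (e : Finset α → M) (i : ℕ) {B S : Finset α} {x : α} :
    ∑ T ∈ S.powersetCard i with insert x B ⊆ T, e T +
        ∑ T ∈ (S.erase x).powersetCard i with B ⊆ T, e T =
      ∑ T ∈ S.powersetCard i with B ⊆ T, e T := by
  rw [← sum_filter_add_sum_filter_not {T ∈ S.powersetCard i | B ⊆ T} (x ∈ ·)]
  congr 2 <;> ext T
  · simp only [mem_filter, insert_subset_iff]
    tauto
  · simp only [mem_filter, mem_powersetCard, subset_erase]
    tauto

variable {K : Type*} [DivisionRing K] [CharZero K] [AddCommGroup M] [Module K M]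
  {N : Submodule K M} {e : Finset α → M} {i j : ℕ}

theorem sum_powersetCard_mem_of_le_card (hij : i ≤ j)
    (hN : ∀ S, #S = j → ∑ T ∈ S.powersetCard i, e T ∈ N) {S : Finset α} (hS : j ≤ #S) :
    ∑ T ∈ S.powersetCard i, e T ∈ N := by
  classical
  induction S using Finset.strongInduction with
  | H S ih =>
    obtain hS | hS := hS.eq_or_lt
    · exact hN S hS.symm
    have facets : ∑ x ∈ S, ∑ T ∈ (S.erase x).powersetCard i, e T ∈ N :=
      sum_mem fun x hx ↦ ih _ (erase_ssubset hx) (by rw [card_erase_of_mem hx]; omega)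
    have card_ne : ((#S - i : ℕ) : K) ≠ 0 := by
      rw [Nat.cast_ne_zero]
      omega
    rwa [sum_sum_powersetCard_erase, ← Nat.cast_smul_eq_nsmul K, N.smul_mem_iff card_ne] at facets

theorem sum_powersetCard_subset_mem [DecidableEq α] (hij : i ≤ j)
    (hN : ∀ S, #S = j → ∑ T ∈ S.powersetCard i, e T ∈ N) {B S : Finset α} (hBS : B ⊆ S)
    (hS : #B + j ≤ #S) : ∑ T ∈ S.powersetCard i with B ⊆ T, e T ∈ N := by
  induction B using Finset.induction_on generalizing S with
  | empty => simpa using sum_powersetCard_mem_of_le_card hij hN (by simpa using hS)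
  | insert x B hx ih =>
    rw [card_insert_of_notMem hx] at hS
    obtain ⟨hxS, hBS⟩ := insert_subset_iff.1 hBS
    have whole := ih hBS (by omega)
    have avoiding := ih (subset_erase.2 ⟨hBS, hx⟩) (by rw [card_erase_of_mem hxS]; omega)
    rwa [← sum_powersetCard_insert_subset_add_sum_erase, N.add_mem_iff_left avoiding] at whole

theorem mem_of_sum_powersetCard_mem (hij : i ≤ j)
    (hN : ∀ S, #S = j → ∑ T ∈ S.powersetCard i, e T ∈ N) {A U : Finset α} (hA : #A = i)
    (hAU : A ⊆ U) (hU : i + j ≤ #U) : e A ∈ N := by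
  classical
  have only_A : {T ∈ U.powersetCard i | A ⊆ T} = {A} := by
    ext T
    simp only [mem_filter, mem_powersetCard, mem_singleton]
    refine ⟨fun ⟨⟨_, hT⟩, hAT⟩ ↦ (eq_of_subset_of_card_le hAT (hT.trans hA.symm).le).symm, ?_⟩
    rintro rfl
    exact ⟨⟨hAU, hA⟩, Subset.rfl⟩
  simpa [only_A] using sum_powersetCard_subset_mem hij hN hAU (by omega)

end PowersetCard

/-- The sum, in the free `ℚ`-module on `P`, of the elements of rank `i` below `y`. In a simplicial
poset there are finitely many of them; if there were infinitely many, this would be `0`. -/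
noncomputable def rankSum {P : Type*} [LE P] (rk : P → ℕ) (i : ℕ) (y : P) : P →₀ ℚ :=
  ∑ᶠ x ∈ {x | x ≤ y ∧ rk x = i}, Finsupp.single x 1

namespace IsSimplicial

variable {P : Type*} [PartialOrder P] [OrderBot P] {rk : P → ℕ}

theorem ncard_Iic (h : IsSimplicial rk) (x : P) : (Set.Iic x).ncard = 2 ^ rk x := by
  obtain ⟨e⟩ := h x
  rw [← Set.Icc_bot, ← Nat.card_coe_set_eq, Nat.card_congr e.toEquiv]
  simp

theorem exists_initialSeg (h : IsSimplicial rk) (z : P) :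
    ∃ φ : Finset (Fin (rk z)) ≤i P, Set.range φ = Set.Iic z := by
  obtain ⟨e⟩ := h z
  let φ : Finset (Fin (rk z)) ↪o P := e.symm.toOrderEmbedding.trans (OrderEmbedding.subtype _)
  have range_φ : Set.range φ = Set.Iic z := by
    change Set.range (Subtype.val ∘ e.symm) = _
    rw [e.symm.surjective.range_comp, Subtype.range_coe, Set.Icc_bot]
  refine ⟨⟨φ.ltEmbedding, fun T y hy ↦ ?_⟩, range_φ⟩
  have hT : φ T ≤ z := range_φ.subset ⟨T, rfl⟩
  exact range_φ.superset (hy.le.trans hT)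

theorem rk_initialSeg (h : IsSimplicial rk) {α : Type*} (φ : Finset α ≤i P) (S : Finset α) :
    rk (φ S) = #S := by
  have image : φ '' S.powerset = Set.Iic (φ S) := by
    ext y
    simp [φ.le_apply_iff]
  have pow_eq : 2 ^ rk (φ S) = 2 ^ #S := by
    rw [← h.ncard_Iic, ← image, Set.ncard_image_of_injective _ (EmbeddingLike.injective φ),
      Set.ncard_coe_finset, card_powerset]
  exact Nat.pow_right_injective le_rfl pow_eq

theorem rankSum_initialSeg (h : IsSimplicial rk) {α : Type*} (φ : Finset α ≤i P) (i : ℕ)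
    (S : Finset α) : rankSum rk i (φ S) = ∑ T ∈ S.powersetCard i, Finsupp.single (φ T) 1 := by
  have image : {x | x ≤ φ S ∧ rk x = i} = φ '' S.powersetCard i := by
    ext y
    simp only [Set.mem_ofPred_eq, φ.le_apply_iff, Set.mem_image, mem_coe, mem_powersetCard]
    constructor
    · rintro ⟨⟨T, hTS, rfl⟩, hT⟩
      exact ⟨T, ⟨hTS, h.rk_initialSeg φ T ▸ hT⟩, rfl⟩
    · rintro ⟨T, ⟨hTS, hT⟩, rfl⟩
      exact ⟨⟨T, hTS, rfl⟩, (h.rk_initialSeg φ T).trans hT⟩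
  rw [rankSum, image, finsum_mem_image (EmbeddingLike.injective φ).injOn, finsum_mem_coe_finset]

theorem single_mem_span_rankSum (h : IsSimplicial rk) {i j : ℕ} (hij : i ≤ j) {x z : P}
    (hx : rk x = i) (hxz : x ≤ z) (hz : i + j ≤ rk z) :
    Finsupp.single x 1 ∈ span ℚ (Set.range fun y : {y // rk y = j} ↦ rankSum rk i y) := by
  obtain ⟨φ, range_φ⟩ := h.exists_initialSeg z
  obtain ⟨A, rfl⟩ := range_φ.superset hxz
  refine mem_of_sum_powersetCard_mem (e := fun T ↦ Finsupp.single (φ T) 1) hij (fun S hS ↦ ?_)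
    ((h.rk_initialSeg φ A).symm.trans hx) (subset_univ A) (by simpa using hz)
  rw [← h.rankSum_initialSeg φ]
  exact subset_span ⟨⟨φ S, (h.rk_initialSeg φ S).trans hS⟩, rfl⟩

end IsSimplicial

theorem fvector_inequality_general {P : Type*} [PartialOrder P] [OrderBot P] {rk : P → ℕ}
    (hsimp : IsSimplicial rk) {i j : ℕ} (hij : i ≤ j)
    (habove : ∀ x, rk x = i → ∃ z, x ≤ z ∧ i + j ≤ rk z) :
    Cardinal.mk {x // rk x = i} ≤ Cardinal.mk {x // rk x = j} := by
  let v : {x // rk x = i} → P →₀ ℚ := fun x ↦ Finsupp.single x 1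
  let w : {y // rk y = j} → P →₀ ℚ := fun y ↦ rankSum rk i y
  have hv : LinearIndependent ℚ v :=
    (Finsupp.linearIndependent_single_one ℚ P).comp _ Subtype.val_injective
  have v_mem (x) : v x ∈ span ℚ (Set.range w) := by
    obtain ⟨z, hxz, hz⟩ := habove x x.2
    exact hsimp.single_mem_span_rankSum hij x.2 hxz hz
  calc Cardinal.mk {x // rk x = i}
    _ = Cardinal.mk (Set.range v) := (Cardinal.mk_range_eq v hv.injective).symm
    _ = Module.rank ℚ (span ℚ (Set.range v)) := (rank_span hv).symm
    _ ≤ Module.rank ℚ (span ℚ (Set.range w)) :=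
      Submodule.rank_mono (span_le.2 (Set.range_subset_iff.2 v_mem))
    _ ≤ Cardinal.mk (Set.range w) := rank_span_le _
    _ ≤ Cardinal.mk {y // rk y = j} := Cardinal.mk_range_le

/-- For a finite pure simplicial poset `P` of rank `k` and `0 < i ≤ k − i`,
the `f`-vector satisfies `f_i(P) ≤ f_{k−i}(P)`. -/
theorem fvector_inequality
    {P : Type*} [Fintype P] [PartialOrder P] [OrderBot P]
    (rk : P → ℕ) (hsimp : IsSimplicial rk)
    (k : ℕ) (hpure : ∀ x : P, IsMax x → rk x = k)
    (i : ℕ) (hi : 0 < i) (hik : i ≤ k - i) :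
    (Finset.univ.filter (fun x : P => rk x = i)).card ≤
      (Finset.univ.filter (fun x : P => rk x = k - i)).card := by
  have below_facet (x : P) : ∃ z, x ≤ z ∧ i + (k - i) ≤ rk z := by
    obtain ⟨z, hxz, hz⟩ := Finite.exists_le_maximal (p := fun _ : P ↦ True) (a := x) trivial
    exact ⟨z, hxz, by rw [hpure z (maximal_true.1 hz)]; omega⟩
  simpa [Fintype.card_subtype] using
    fvector_inequality_general hsimp hik fun x _ ↦ below_facet x
end

section
/- Let G be a finite simple graph and let d(G) be its degree sequence listed in weakly decreasing order. Then the conjugate sequence d(G)^T majorizes d(G): (d(G))^T ⊵ d(G). -/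
/-- The degree sequence of a finite simple graph, as a multiset. -/
def degreeSequence {V : Type*} [Fintype V] (G : SimpleGraph V) [DecidableRel G.Adj] :
    Multiset ℕ :=
  Finset.univ.val.map (fun v => G.degree v)

/-- The conjugate of the degree sequence: its `i`-th entry (for `i ≥ 1`) is the
number of vertices of degree at least `i`.  Entries with `i` beyond the number of
vertices are `0` and may be omitted (sequences are padded with zeros). -/
def conjugateDegreeSequence {V : Type*} [Fintype V] (G : SimpleGraph V)
    [DecidableRel G.Adj] : Multiset ℕ :=
  (Finset.Icc 1 (Fintype.card V)).val.map
    (fun i => (Finset.univ.filter (fun v => i ≤ G.degree v)).card)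

/-!
Let `R` be a finite relation. A set of `k` left vertices sends at most `min k (deg b)` edges to
each right vertex `b`, so its degrees sum to at most `∑ b, min k (deg b)`, which is exactly the
sum of the first `k` entries of the conjugate of the right degree sequence. A graph is the case of
a symmetric relation, where the left and right degrees coincide.
-/

open Finset

theorem exists_le_map_eq_of_le_map {α β : Type*} {f : α → β} {s : Multiset α}
    {t : Multiset β} (h : t ≤ s.map f) : ∃ u ≤ s, u.map f = t := by
  induction s using Quotient.inductionOn with | _ l
  induction t using Quotient.inductionOn with | _ m
  obtain ⟨m', hperm, hsub⟩ := h
  obtain ⟨l', hl', rfl⟩ := List.sublist_map_iff.1 hsub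
  exact ⟨l', hl'.subperm, Quotient.sound hperm⟩

section Sorting

variable {α β : Type*} [LinearOrder β]

theorem sort_map_of_antitone [LinearOrder α] {f : α → β} (hf : Antitone f) (s : Multiset α) :
    (s.map f).sort (· ≥ ·) = (s.sort (· ≤ ·)).map f := by
  have sorted : ((s.sort (· ≤ ·)).map f).Pairwise (· ≥ ·) :=
    (s.pairwise_sort (· ≤ ·)).map f fun _ _ hab => hf hab
  calc (s.map f).sort (· ≥ ·)
      = Multiset.sort ((s.sort (· ≤ ·)).map f : Multiset β) (· ≥ ·) := by
        rw [← Multiset.map_coe, Multiset.sort_eq]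
    _ = (s.sort (· ≤ ·)).map f := List.mergeSort_eq_self _ sorted

theorem sum_take_sort_map_Icc [AddCommMonoid β] {f : ℕ → β} (hf : Antitone f) (n r : ℕ) :
    ((((Icc 1 n).val.map f).sort (· ≥ ·)).take r).sum = ∑ i ∈ Icc 1 (min r n), f i := by
  have sort_Icc : (Icc 1 n).val.sort (· ≤ ·) = List.range' 1 n :=
    List.mergeSort_eq_self _ (List.sortedLT_range' 1 n one_ne_zero).sortedLE.pairwise
  have take_range' : (List.range' 1 n).take r = List.range' 1 (min r n) := by
    rw [List.take_eq_take_min, List.length_range',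
      List.take_range'_of_length_ge (min_le_right r n)]
  rw [sort_map_of_antitone hf, sort_Icc, ← List.map_take, take_range']
  rfl

theorem exists_subset_sum_eq_sum_take_sort_map [AddCommMonoid β] (s : Finset α) (f : α → β)
    (r : ℕ) : ∃ u ⊆ s, #u = min r #s ∧
      ∑ a ∈ u, f a = (((s.val.map f).sort (· ≥ ·)).take r).sum := by
  have le_map : (((s.val.map f).sort (· ≥ ·)).take r : Multiset β) ≤ s.val.map f :=
    (Multiset.coe_le.2 (List.take_sublist r _).subperm).trans_eq (Multiset.sort_eq _ _)
  obtain ⟨u, hus, hu⟩ := exists_le_map_eq_of_le_map le_map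
  refine ⟨⟨u, Multiset.nodup_of_le hus s.nodup⟩, val_le_iff.1 hus, ?_, ?_⟩
  · simpa using congrArg Multiset.card hu
  · simpa using congrArg Multiset.sum hu

end Sorting

theorem sum_Icc_card_filter_le {β : Type*} (t : Finset β) (d : β → ℕ) (m : ℕ) :
    ∑ i ∈ Icc 1 m, #{b ∈ t | i ≤ d b} = ∑ b ∈ t, min m (d b) := by
  have card_below (b : β) : #{i ∈ Icc 1 m | i ≤ d b} = min m (d b) := by
    have : {i ∈ Icc 1 m | i ≤ d b} = Icc 1 (min m (d b)) := by ext; simp [and_assoc]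
    rw [this, Nat.card_Icc, Nat.add_sub_cancel]
  calc ∑ i ∈ Icc 1 m, #{b ∈ t | i ≤ d b}
      = ∑ b ∈ t, #{i ∈ Icc 1 m | i ≤ d b} :=
        sum_card_bipartiteAbove_eq_sum_card_bipartiteBelow fun i b => i ≤ d b
    _ = ∑ b ∈ t, min m (d b) := sum_congr rfl fun b _ => card_below b

theorem antitone_card_filter_le {β γ : Type*} [Preorder γ] [DecidableLE γ] (t : Finset β)
    (d : β → γ) : Antitone fun i => #{b ∈ t | i ≤ d b} :=
  fun _ _ hij => card_le_card <| monotone_filter_right t fun _ _ => hij.trans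

section Relation

variable {α β : Type*} (R : α → β → Prop) [∀ a b, Decidable (R a b)]

theorem sum_card_bipartiteAbove_le_sum_min {s u : Finset α} (hus : u ⊆ s) (t : Finset β) :
    ∑ a ∈ u, #(t.bipartiteAbove R a) ≤ ∑ b ∈ t, min #u #(s.bipartiteBelow R b) := by
  rw [sum_card_bipartiteAbove_eq_sum_card_bipartiteBelow]
  exact sum_le_sum fun b _ =>
    le_min (card_filter_le u _) (card_le_card (filter_subset_filter _ hus))

theorem conjugate_majorizes_degreeSequence_general (s : Finset α) (t : Finset β) :
    Majorizes ((Icc 1 #s).val.map fun i => #{b ∈ t | i ≤ #(s.bipartiteBelow R b)})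
      (s.val.map fun a => #(t.bipartiteAbove R a)) := by
  refine ⟨?_, fun r => ?_⟩
  · calc ∑ i ∈ Icc 1 #s, #{b ∈ t | i ≤ #(s.bipartiteBelow R b)}
        = ∑ b ∈ t, min #s #(s.bipartiteBelow R b) := sum_Icc_card_filter_le ..
      _ = ∑ b ∈ t, #(s.bipartiteBelow R b) :=
        sum_congr rfl fun b _ => min_eq_right (card_filter_le s _)
      _ = ∑ a ∈ s, #(t.bipartiteAbove R a) :=
        (sum_card_bipartiteAbove_eq_sum_card_bipartiteBelow R).symm
  · obtain ⟨u, hus, hcard, hsum⟩ :=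
      exists_subset_sum_eq_sum_take_sort_map s (fun a => #(t.bipartiteAbove R a)) r
    rw [← hsum, sum_take_sort_map_Icc (antitone_card_filter_le t _), sum_Icc_card_filter_le,
      ← hcard]
    exact sum_card_bipartiteAbove_le_sum_min R hus t

end Relation

/-- The degree sequence of any finite simple graph is majorized by its conjugate:
`(d(G))^T ⊵ d(G)`. -/
theorem conjugate_majorizes_degreeSequence
    {V : Type*} [Fintype V] (G : SimpleGraph V) [DecidableRel G.Adj] :
    Majorizes (conjugateDegreeSequence G) (degreeSequence G) := by
  simpa [degreeSequence, conjugateDegreeSequence, bipartiteAbove, bipartiteBelow, G.adj_comm,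
    ← G.card_neighborFinset_eq_degree, G.neighborFinset_eq_filter]
    using conjugate_majorizes_degreeSequence_general G.Adj univ univ
end
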